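/- (Closed-loop exponential decay in the linear case θ = 0.) Suppose Assumption 1 holds with constant ω > 0. Let q > 0, A₁* := A₁ + qI₂, and let M ∈ C¹([0,1]; M₂(ℝ)) and N ∈ M₂(ℝ) satisfy M(0) = 0, ∫₀¹ K₁(ξ)M(ξ) dξ = I₂, and Λ M′(ξ) = (𝒦₃M) + HN on (0,1). Define ‖MᵀQ‖_∞ := sup_{ξ∈[0,1]} ‖M(ξ)ᵀQ(ξ)‖ (operator norm), γ₁ := (q/ω)‖G₁⁻¹A₁*‖²‖MᵀQ‖_∞², λ̄ := sup_{ξ∈[0,1]} λ_max(Q(ξ)), and γ := min{q, ω/λ̄}. Let T > 0, let X_δ ∈ C¹([0,T]; ℝ²), and let ζ : [0,1]×[0,T] → ℝ² be a C¹ function with ζ(0,t) = 0 satisfying the closed-loop system X_δ′(t) = −qX_δ(t) + G₁(𝒦₁ ζ(·,t)) and ∂ζ/∂t + Λ ∂ζ/∂ξ = (𝒦₃ ζ(·,t)) − H[(G₁⁻¹A₁*G₁)ᵀ(𝒦_M ζ(·,t)) + γ₁G₁ᵀX_δ(t)] + M(ξ)·G₁⁻¹A₁*[G₁(𝒦₁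 ζ(·,t)) − qX_δ(t)] on (0,1)×(0,T), where (𝒦_M ζ(·,t)) := ∫₀¹ M(ξ)ᵀQ(ξ)ζ(ξ,t) dξ. Then the Lyapunov functional V(t) := (1/2)‖X_δ(t)‖² + (1/(2γ₁))∫₀¹ ζ(ξ,t)ᵀQ(ξ)ζ(ξ,t) dξ satisfies V(t) ≤ V(0)·e^{−γt} for all t ∈ [0,T]. -/

import Mathlib

open MeasureTheory Matrix Set

noncomputable section

attribute [local instance] Matrix.normedAddCommGroup Matrix.normedSpace

abbrev Vec2 := Fin 2 → ℝ
abbrev Mat2 := Matrix (Fin 2) (Fin 2) ℝ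

/-- Nondimensional pressure distribution `p̄(ξ) = (a/(1-e^{-a})) e^{-aξ}`. -/
def pbar (a ξ : ℝ) : ℝ := a / (1 - Real.exp (-a)) * Real.exp (-a * ξ)

/-- The physical parameters of the single-track tire model. -/
structure TireParams where
  vx : ℝ
  L1 : ℝ
  L2 : ℝ
  Fz1 : ℝ
  Fz2 : ℝ
  σ1 : ℝ
  σ2 : ℝ
  a1 : ℝ
  a2 : ℝ
  φ1 : ℝ
  φ2 : ℝ
  vx_pos : 0 < vx
  L1_pos : 0 < L1
  L2_pos : 0 < L2
  Fz1_pos : 0 < Fz1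
  Fz2_pos : 0 < Fz2
  σ1_pos : 0 < σ1
  σ2_pos : 0 < σ2
  a1_pos : 0 < a1
  a2_pos : 0 < a2
  φ1_mem : φ1 ∈ Set.Ioc (0:ℝ) 1
  φ2_mem : φ2 ∈ Set.Ioc (0:ℝ) 1

namespace TireParams

variable (P : TireParams)

def ψ1 : ℝ := 1 - P.φ1
def ψ2 : ℝ := 1 - P.φ2

def Λmat : Mat2 := Matrix.diagonal ![P.vx / P.L1, P.vx / P.L2]

def Hmat : Mat2 := (2:ℝ) • Matrix.diagonal ![P.φ1, P.φ2]

def K1 (ξ : ℝ) : Mat2 :=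
  Matrix.diagonal ![P.Fz1 * P.σ1 * pbar P.a1 ξ, P.Fz2 * P.σ2 * pbar P.a2 ξ]

def K2 (ξ : ℝ) : Mat2 :=
  -Matrix.diagonal ![P.ψ1 * pbar P.a1 ξ, P.ψ2 * pbar P.a2 ξ]

def K3 (ξ : ℝ) : Mat2 :=
  -P.vx • Matrix.diagonal ![P.ψ1 / P.L1 * deriv (pbar P.a1) ξ, P.ψ2 / P.L2 * deriv (pbar P.a2) ξ]

def K4 : Mat2 :=
  P.vx • Matrix.diagonal ![P.ψ1 / P.L1 * pbar P.a1 1, P.ψ2 / P.L2 * pbar P.a2 1]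

def Q (ξ : ℝ) : Mat2 := P.K1 ξ * (P.Hmat)⁻¹

/-- `(𝒦ζ) = ∫₀¹ K(ξ) ζ(ξ) dξ`. -/
def Kop (K : ℝ → Mat2) (ζ : ℝ → Vec2) : Vec2 := ∫ ξ in (0:ℝ)..1, (K ξ).mulVec (ζ ξ)

def K1op (ζ : ℝ → Vec2) : Vec2 := Kop P.K1 ζ

def K2op (ζ : ℝ → Vec2) : Vec2 := Kop P.K2 ζ

/-- `(𝒦₃ζ) = ∫₀¹ K₃(ξ)ζ(ξ)dξ + K₄ ζ(1)`. -/
def K3op (ζ : ℝ → Vec2) : Vec2 := Kop P.K3 ζ + (P.K4).mulVec (ζ 1)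

/-- `(𝒜ζ)(ξ) = -Λ ζ'(ξ) + (𝒦₃ζ)`, expressed through a given derivative `ζ'`. -/
def Aop (ζ ζ' : ℝ → Vec2) (ξ : ℝ) : Vec2 := -(P.Λmat).mulVec (ζ' ξ) + P.K3op ζ

end TireParams

/-- `ζ` is C¹ on `[0,1]` with derivative `ζ'`. -/
def IsC1On01 (ζ ζ' : ℝ → Vec2) : Prop :=
  (∀ ξ ∈ Icc (0:ℝ) 1, HasDerivWithinAt ζ (ζ' ξ) (Icc (0:ℝ) 1) ξ) ∧
    ContinuousOn ζ' (Icc (0:ℝ) 1)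

/-- Square integrability on `(0,1)`. -/
def SqIntegrableOn01 (ζ : ℝ → Vec2) : Prop :=
  Measurable ζ ∧ IntervalIntegrable (fun ξ => ∑ i, (ζ ξ i) ^ 2) volume 0 1

/-- Assumption 1 (strict dissipativity of `𝒜`). -/
def Assumption1 (P : TireParams) (ω : ℝ) : Prop :=
  ∀ ζ ζ' : ℝ → Vec2, IsC1On01 ζ ζ' → ζ 0 = 0 →
    (∫ ξ in (0:ℝ)..1, P.Aop ζ ζ' ξ ⬝ᵥ (P.Q ξ).mulVec (ζ ξ)) ≤
      -ω * ∫ ξ in (0:ℝ)..1, ∑ i, (ζ ξ i) ^ 2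

/-- Assumption 2 (dissipativity of the source `Σ`). -/
def Assumption2 (P : TireParams) (S : Vec2 → Mat2) : Prop :=
  ∀ y : Vec2, ∀ ζ : ℝ → Vec2, SqIntegrableOn01 ζ →
    (∫ ξ in (0:ℝ)..1, ζ ξ ⬝ᵥ (P.Q ξ).mulVec ((S y).mulVec (ζ ξ + P.K2op ζ))) ≤ 0

/-- Matrix-valued `M` is C¹ on `[0,1]` with derivative `M'`. -/
def IsC1MatOn01 (M M' : ℝ → Mat2) : Prop :=
  (∀ ξ ∈ Icc (0:ℝ) 1, HasDerivWithinAt M (M' ξ) (Icc (0:ℝ) 1) ξ) ∧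
    ContinuousOn M' (Icc (0:ℝ) 1)

def A1mat (vx : ℝ) : Mat2 := !![0, -vx; 0, 0]

def G1mat (m Iz l1 l2 : ℝ) : Mat2 := -!![1/m, 1/m; l1/Iz, -l2/Iz]

/-- `(𝒦M) = ∫₀¹ K(ξ)M(ξ)dξ` for matrix-valued `M`. -/
def KopM (K : ℝ → Mat2) (M : ℝ → Mat2) : Mat2 := ∫ ξ in (0:ℝ)..1, K ξ * M ξ

/-- Operator norm on 2×2 real matrices induced by the Euclidean norm. -/
def opNorm2 (A : Mat2) : ℝ := ‖Matrix.toEuclideanCLM (𝕜 := ℝ) A‖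

/-- `(𝒦_M ζ) = ∫₀¹ M(ξ)ᵀ Q(ξ) ζ(ξ) dξ`. -/
def KMop (P : TireParams) (M : ℝ → Mat2) (ζ : ℝ → Vec2) : Vec2 :=
  ∫ ξ in (0:ℝ)..1, ((M ξ)ᵀ * P.Q ξ).mulVec (ζ ξ)

/-!
Differentiating `V` along a solution produces three kinds of terms. The dissipative ones are
`-q ‖X‖²` and, by Assumption 1, `-(ω / γ₁) ‖ζ‖²`. Writing `G = G₁` and `B = G₁⁻¹ A₁*`, the feedback
through `H` contributes `-X · G 𝒦₁ζ` and `-(1 / γ₁) B G 𝒦₁ζ · 𝒦_M ζ`, because `H Q = K₁`: the first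
cancels the coupling of the finite-dimensional part, the second cancels the term which `M B G 𝒦₁ζ`
produces. What is left is the single cross term `-(q / γ₁) B X · 𝒦_M ζ`, and `γ₁` is exactly large
enough for Young's inequality to absorb it into one half of the dissipation. Since the weighted
energy of `ζ` is at most `λ̄ ‖ζ‖²`, this gives `V' ≤ -γ V`.
-/

lemma mul_le_young {ω : ℝ} (hω : 0 < ω) (a b : ℝ) :
    a * b ≤ ω / 2 * b ^ 2 + a ^ 2 / (2 * ω) := by
  have hsq : 0 ≤ (ω * b - a) ^ 2 / (2 * ω) := by positivity
  have hexpand : (ω * b - a) ^ 2 / (2 * ω) = ω / 2 * b ^ 2 + a ^ 2 / (2 * ω) - a * b := by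
    field_simp
    ring
  linarith

section MatrixAnalysis

variable {m n : Type*} [Fintype n]

lemma mulVec_dotProduct_mulVec [Fintype m] (A B : Matrix m n ℝ) (x y : n → ℝ) :
    (A *ᵥ x) ⬝ᵥ (B *ᵥ y) = x ⬝ᵥ ((Aᵀ * B) *ᵥ y) := by
  rw [← mulVec_mulVec, dotProduct_transpose_mulVec, dotProduct_comm]

lemma abs_mulVec_dotProduct_mulVec_le [DecidableEq n] (A B : Matrix n n ℝ) (x y : n → ℝ) :
    |(A *ᵥ x) ⬝ᵥ (B *ᵥ y)| ≤
      ‖toEuclideanCLM (𝕜 := ℝ) A‖ * ‖WithLp.toLp 2 x‖ *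
        (‖toEuclideanCLM (𝕜 := ℝ) B‖ * ‖WithLp.toLp 2 y‖) := by
  have hinner : (A *ᵥ x) ⬝ᵥ (B *ᵥ y) =
      inner ℝ (toEuclideanCLM (𝕜 := ℝ) A (WithLp.toLp 2 x))
        (toEuclideanCLM (𝕜 := ℝ) B (WithLp.toLp 2 y)) := by
    simp [EuclideanSpace.inner_eq_star_dotProduct, dotProduct_comm]
  rw [hinner]
  exact (abs_real_inner_le_norm _ _).trans <| by
    gcongr <;> exact ContinuousLinearMap.le_opNorm _ _

lemma neg_mul_mulVec_dotProduct_mulVec_le [DecidableEq n] {ω q c : ℝ} (hω : 0 < ω) (hq : 0 ≤ q)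
    (A : Matrix n n ℝ) {B : Matrix n n ℝ} (hB : ‖toEuclideanCLM (𝕜 := ℝ) B‖ ≤ c) (x y : n → ℝ) :
    -(q * ((A *ᵥ x) ⬝ᵥ (B *ᵥ y))) ≤
      ω / 2 * (∑ i, y i ^ 2) +
        (q * ‖toEuclideanCLM (𝕜 := ℝ) A‖ * c) ^ 2 / (2 * ω) * ∑ i, x i ^ 2 := by
  rw [← EuclideanSpace.real_norm_sq_eq (WithLp.toLp 2 x),
    ← EuclideanSpace.real_norm_sq_eq (WithLp.toLp 2 y)]
  set α := ‖toEuclideanCLM (𝕜 := ℝ) A‖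
  set r := ‖WithLp.toLp 2 x‖
  set ρ := ‖WithLp.toLp 2 y‖
  calc -(q * ((A *ᵥ x) ⬝ᵥ (B *ᵥ y)))
      ≤ q * |(A *ᵥ x) ⬝ᵥ (B *ᵥ y)| := by
        rw [← mul_neg]
        gcongr
        exact neg_le_abs _
    _ ≤ q * (α * r * (‖toEuclideanCLM (𝕜 := ℝ) B‖ * ρ)) := by
        gcongr
        exact abs_mulVec_dotProduct_mulVec_le A B x y
    _ ≤ q * (α * r * (c * ρ)) := by gcongr
    _ = q * α * c * r * ρ := by ring
    _ ≤ ω / 2 * ρ ^ 2 + (q * α * c * r) ^ 2 / (2 * ω) := mul_le_young hω _ _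
    _ = ω / 2 * ρ ^ 2 + (q * α * c) ^ 2 / (2 * ω) * r ^ 2 := by ring

lemma hasDerivAt_dotProduct {f g : ℝ → n → ℝ} {f' g' : n → ℝ} {t : ℝ}
    (hf : HasDerivAt f f' t) (hg : HasDerivAt g g' t) :
    HasDerivAt (fun t ↦ f t ⬝ᵥ g t) (f' ⬝ᵥ g t + f t ⬝ᵥ g') t := by
  rw [hasDerivAt_pi] at hf hg
  simp only [dotProduct, ← Finset.sum_add_distrib]
  exact HasDerivAt.fun_sum fun i _ ↦ (hf i).fun_mul (hg i)

lemma hasDerivAt_dotProduct_mulVec_self {A : Matrix n n ℝ} (hA : A.IsSymm) {f : ℝ → n → ℝ}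
    {f' : n → ℝ} {t : ℝ} (hf : HasDerivAt f f' t) :
    HasDerivAt (fun t ↦ f t ⬝ᵥ (A *ᵥ f t)) (2 * (f' ⬝ᵥ (A *ᵥ f t))) t := by
  have hAf : HasDerivAt (fun t ↦ A *ᵥ f t) (A *ᵥ f') t :=
    (LinearMap.toContinuousLinearMap A.mulVecLin).hasFDerivAt.comp_hasDerivAt t hf
  have hsymm : f t ⬝ᵥ (A *ᵥ f') = f' ⬝ᵥ (A *ᵥ f t) := by
    nth_rw 1 [← hA.eq]
    rw [dotProduct_transpose_mulVec]
  exact (hasDerivAt_dotProduct hf hAf).congr_deriv (by rw [hsymm, two_mul])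

lemma hasDerivAt_sum_sq {f : ℝ → n → ℝ} {f' : n → ℝ} {t : ℝ} (hf : HasDerivAt f f' t) :
    HasDerivAt (fun t ↦ ∑ i, f t i ^ 2) (2 * (f t ⬝ᵥ f')) t := by
  simp only [sq]
  exact (hasDerivAt_dotProduct hf hf).congr_deriv (by rw [dotProduct_comm, two_mul])

lemma dotProduct_diagonal_mulVec_le [DecidableEq n] {d : n → ℝ} {c : ℝ} (hd : ∀ i, d i ≤ c)
    (x : n → ℝ) : x ⬝ᵥ (diagonal d *ᵥ x) ≤ c * ∑ i, x i ^ 2 := by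
  simp only [dotProduct, mulVec_diagonal, Finset.mul_sum]
  refine Finset.sum_le_sum fun i _ ↦ ?_
  calc x i * (d i * x i) = d i * x i ^ 2 := by ring
    _ ≤ c * x i ^ 2 := by gcongr; exact hd i

lemma nonsing_inv_mul_ne_zero {R : Type*} [CommRing R] [DecidableEq n] {A : Matrix n n R}
    {B : Matrix n m R} (hA : IsUnit A.det) (hB : B ≠ 0) : A⁻¹ * B ≠ 0 := by
  intro h
  apply hB
  rw [← mul_nonsing_inv_cancel_left A B hA, h, Matrix.mul_zero]

end MatrixAnalysis

section IntervalIntegral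

lemma dotProduct_intervalIntegral {n : Type*} [Fintype n] {μ : Measure ℝ} {a b : ℝ}
    {f : ℝ → n → ℝ} (hf : IntervalIntegrable f μ a b) (u : n → ℝ) :
    u ⬝ᵥ (∫ ξ in a..b, f ξ ∂μ) = ∫ ξ in a..b, u ⬝ᵥ f ξ ∂μ :=
  ((LinearMap.toContinuousLinearMap (dotProductBilin ℝ ℝ u)).intervalIntegral_comp_comm hf).symm

variable {E : Type*} [NormedAddCommGroup E] [NormedSpace ℝ E] {a b : ℝ}

lemma exists_ne_zero_of_intervalIntegral_ne_zero {f : ℝ → E} (hf : ∫ ξ in a..b, f ξ ≠ 0) :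
    ∃ ξ ∈ uIcc a b, f ξ ≠ 0 := by
  contrapose! hf
  rw [intervalIntegral.integral_congr hf]
  exact intervalIntegral.integral_zero

lemma intervalIntegral_congr_Ioo (hab : a ≤ b) {f g : ℝ → E} (h : ∀ ξ ∈ Ioo a b, f ξ = g ξ) :
    ∫ ξ in a..b, f ξ = ∫ ξ in a..b, g ξ := by
  simp only [intervalIntegral.integral_of_le hab, integral_Ioc_eq_integral_Ioo]
  exact setIntegral_congr_fun measurableSet_Ioo h

lemma continuousOn_parametric_intervalIntegral (hab : a ≤ b) {X : Type*} [TopologicalSpace X]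
    {s : Set X} {f : ℝ → X → E}
    (hf : ContinuousOn (fun p : ℝ × X ↦ f p.1 p.2) (Icc a b ×ˢ s)) :
    ContinuousOn (fun x ↦ ∫ ξ in a..b, f ξ x) s := by
  rw [continuousOn_iff_continuous_domRestrict]
  have hproj : Continuous fun p : s × ℝ ↦ f (projIcc a b hab p.2) p.1 :=
    hf.comp_continuous (f := fun p : s × ℝ ↦ ((projIcc a b hab p.2 : ℝ), (p.1 : X)))
      (by fun_prop) fun p ↦ ⟨Subtype.coe_prop _, p.1.2⟩
  refine (intervalIntegral.continuous_parametric_intervalIntegral_of_continuous'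
    (μ := volume)
    (f := fun (x : s) ξ ↦ f (projIcc a b hab ξ) x) hproj a b).congr fun x ↦ ?_
  refine intervalIntegral.integral_congr fun ξ hξ ↦ ?_
  rw [uIcc_of_le hab] at hξ
  simp only [projIcc_of_mem hab hξ]

lemma hasDerivAt_intervalIntegral_of_continuousOn (hab : a ≤ b) {c d t : ℝ} {f f' : ℝ → ℝ → E}
    (hf : ∀ t ∈ Ioo c d, ContinuousOn (f · t) (Icc a b))
    (hf' : ContinuousOn (fun p : ℝ × ℝ ↦ f' p.1 p.2) (Icc a b ×ˢ Icc c d))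
    (hderiv : ∀ ξ ∈ Icc a b, ∀ t ∈ Ioo c d, HasDerivAt (f ξ) (f' ξ t) t) (ht : t ∈ Ioo c d) :
    HasDerivAt (fun t ↦ ∫ ξ in a..b, f ξ t) (∫ ξ in a..b, f' ξ t) t := by
  obtain ⟨C, hC⟩ := (isCompact_Icc.prod isCompact_Icc).exists_bound_of_continuousOn hf'
  have hf'_slice : ContinuousOn (f' · t) (Icc a b) :=
    hf'.comp (f := fun ξ : ℝ ↦ (ξ, t)) (by fun_prop) fun ξ hξ ↦ ⟨hξ, Ioo_subset_Icc_self ht⟩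
  have hIoc : uIoc a b ⊆ Icc a b := by rw [uIoc_of_le hab]; exact Ioc_subset_Icc_self
  have hmeas {g : ℝ → E} (hg : ContinuousOn g (Icc a b)) :
      AEStronglyMeasurable g (volume.restrict (uIoc a b)) :=
    (hg.mono hIoc).aestronglyMeasurable measurableSet_uIoc
  refine (intervalIntegral.hasDerivAt_integral_of_dominated_loc_of_deriv_le
    (F := fun t ξ ↦ f ξ t) (F' := fun t ξ ↦ f' ξ t) (bound := fun _ ↦ C)
    (Ioo_mem_nhds ht.1 ht.2) ?_ ((hf t ht).intervalIntegrable_of_Icc hab) (hmeas hf'_slice)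
    ?_ intervalIntegrable_const ?_).2
  · filter_upwards [Ioo_mem_nhds ht.1 ht.2] with t ht using hmeas (hf t ht)
  · exact .of_forall fun ξ hξ τ hτ ↦ hC (ξ, τ) ⟨hIoc hξ, Ioo_subset_Icc_self hτ⟩
  · exact .of_forall fun ξ hξ τ hτ ↦ hderiv ξ (hIoc hξ) τ hτ

end IntervalIntegral

lemma le_mul_exp_of_hasDerivAt_le {f f' : ℝ → ℝ} {c a b : ℝ} (hf : ContinuousOn f (Icc a b))
    (hf' : ∀ t ∈ Ioo a b, HasDerivAt f (f' t) t) (hle : ∀ t ∈ Ioo a b, f' t ≤ -c * f t) :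
    ∀ t ∈ Icc a b, f t ≤ f a * Real.exp (-c * (t - a)) := by
  have hderiv : ∀ t ∈ Ioo a b, HasDerivAt (fun t ↦ f t * Real.exp (c * (t - a)))
      ((f' t + c * f t) * Real.exp (c * (t - a))) t := fun t ht ↦
    ((hf' t ht).fun_mul (((hasDerivAt_id t).sub_const a).const_mul c).exp).congr_deriv
      (by simp only [id]; ring)
  have hanti : AntitoneOn (fun t ↦ f t * Real.exp (c * (t - a))) (Icc a b) := by
    refine antitoneOn_of_hasDerivWithinAt_nonpos (convex_Icc a b) (by fun_prop)
      (f' := fun t ↦ (f' t + c * f t) * Real.exp (c * (t - a))) ?_ ?_ <;> rw [interior_Icc]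
    · exact fun t ht ↦ (hderiv t ht).hasDerivWithinAt
    · exact fun t ht ↦ mul_nonpos_of_nonpos_of_nonneg (by linarith [hle t ht]) (Real.exp_nonneg _)
  intro t ht
  have hexp := hanti (left_mem_Icc.2 (ht.1.trans ht.2)) ht ht.1
  simp only [sub_self, mul_zero, Real.exp_zero, mul_one] at hexp
  rwa [neg_mul, Real.exp_neg, ← div_eq_mul_inv, le_div_iff₀ (Real.exp_pos _)]

lemma pbar_pos {a : ℝ} (ha : 0 < a) (ξ : ℝ) : 0 < pbar a ξ :=
  mul_pos (div_pos ha (by simpa using ha)) (Real.exp_pos _)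

@[fun_prop]
lemma continuous_pbar (a : ℝ) : Continuous (pbar a) := by
  unfold pbar
  fun_prop

lemma opNorm2_pos {A : Mat2} (hA : A ≠ 0) : 0 < opNorm2 A :=
  norm_pos_iff.2 (by simpa using hA)

lemma continuous_opNorm2 : Continuous opNorm2 :=
  (LinearMap.continuous_of_finiteDimensional
    (toEuclideanCLM (n := Fin 2) (𝕜 := ℝ)).toAlgEquiv.toLinearMap).norm

lemma det_G1mat (m Iz l1 l2 : ℝ) : (G1mat m Iz l1 l2).det = -((l1 + l2) / (m * Iz)) := by
  simp only [G1mat, det_neg, det_fin_two_of, Fintype.card_fin]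
  ring

lemma A1mat_add_smul_one_ne_zero (vx : ℝ) {q : ℝ} (hq : q ≠ 0) :
    A1mat vx + q • (1 : Mat2) ≠ 0 := fun h ↦
  hq (by simpa [A1mat] using congrFun (congrFun h 0) 0)

namespace TireParams

variable (P : TireParams)

/-- The diagonal entries of `Q(ξ)`, that is, its eigenvalues. -/
def weight (ξ : ℝ) : Vec2 :=
  ![P.Fz1 * P.σ1 * pbar P.a1 ξ / (2 * P.φ1), P.Fz2 * P.σ2 * pbar P.a2 ξ / (2 * P.φ2)]

/-- The paper's `λ̄`, the supremum over `[0,1]` of the largest eigenvalue of `Q(ξ)`. -/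
def lamBar : ℝ := sSup ((fun ξ ↦ sSup (spectrum ℝ (P.Q ξ))) '' Icc (0 : ℝ) 1)

/-- The paper's `‖MᵀQ‖_∞`. -/
def supNormMQ (M : ℝ → Mat2) : ℝ := sSup ((fun ξ ↦ opNorm2 ((M ξ)ᵀ * P.Q ξ)) '' Icc (0 : ℝ) 1)

/-- The `Q`-weighted `L²` pairing `∫₀¹ yᵀQz dξ`, with respect to which `𝒜` is dissipative. -/
def weightedInner (y z : ℝ → Vec2) : ℝ := ∫ ξ in (0 : ℝ)..1, y ξ ⬝ᵥ (P.Q ξ *ᵥ z ξ)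

lemma weight_pos (ξ : ℝ) (i : Fin 2) : 0 < P.weight ξ i := by
  have hφ1 := P.φ1_mem.1
  have hφ2 := P.φ2_mem.1
  have hFz1 := P.Fz1_pos
  have hFz2 := P.Fz2_pos
  have hσ1 := P.σ1_pos
  have hσ2 := P.σ2_pos
  have hp1 := pbar_pos P.a1_pos ξ
  have hp2 := pbar_pos P.a2_pos ξ
  fin_cases i <;> simp only [weight, Fin.zero_eta, Fin.mk_one, cons_val_zero, cons_val_one] <;>
    positivity

lemma continuous_weight : Continuous P.weight := by
  refine continuous_pi fun i ↦ ?_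
  fin_cases i <;> simp only [weight, Fin.zero_eta, Fin.mk_one, cons_val_zero, cons_val_one] <;>
    fun_prop

lemma Hmat_eq_diagonal : P.Hmat = diagonal ![2 * P.φ1, 2 * P.φ2] := by
  rw [Hmat, ← diagonal_smul]
  simp

lemma Hmat_mul_diagonal_weight (ξ : ℝ) : P.Hmat * diagonal (P.weight ξ) = P.K1 ξ := by
  have hφ1 := P.φ1_mem.1.ne'
  have hφ2 := P.φ2_mem.1.ne'
  rw [Hmat_eq_diagonal, diagonal_mul_diagonal, K1]
  congr 1
  ext i
  fin_cases i <;> simp [weight] <;> field_simp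

lemma isUnit_det_Hmat : IsUnit P.Hmat.det := by
  have hφ1 := P.φ1_mem.1
  have hφ2 := P.φ2_mem.1
  rw [Hmat_eq_diagonal, det_diagonal, Fin.prod_univ_two]
  exact isUnit_iff_ne_zero.2 (by simp [hφ1.ne', hφ2.ne'])

lemma Q_eq_diagonal (ξ : ℝ) : P.Q ξ = diagonal (P.weight ξ) := by
  have hcomm : P.Hmat * diagonal (P.weight ξ) = diagonal (P.weight ξ) * P.Hmat := by
    rw [Hmat_eq_diagonal, diagonal_mul_diagonal, diagonal_mul_diagonal]
    simp only [mul_comm]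
  rw [Q, ← Hmat_mul_diagonal_weight, hcomm, mul_nonsing_inv_cancel_right _ _ P.isUnit_det_Hmat]

lemma posDef_Q (ξ : ℝ) : (P.Q ξ).PosDef := by
  rw [Q_eq_diagonal]
  exact PosDef.diagonal (P.weight_pos ξ)

lemma isSymm_Q (ξ : ℝ) : (P.Q ξ).IsSymm := by
  rw [Q_eq_diagonal]
  exact isSymm_diagonal _

@[fun_prop]
lemma continuous_Q : Continuous P.Q := by
  simp only [funext P.Q_eq_diagonal]
  exact P.continuous_weight.matrix_diagonal

@[fun_prop]
lemma continuous_K1 : Continuous P.K1 := by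
  simp only [← funext P.Hmat_mul_diagonal_weight]
  exact continuous_const.matrix_mul P.continuous_weight.matrix_diagonal

lemma Hmat_mulVec_dotProduct_Q_mulVec (ξ : ℝ) (w z : Vec2) :
    (P.Hmat *ᵥ w) ⬝ᵥ (P.Q ξ *ᵥ z) = w ⬝ᵥ (P.K1 ξ *ᵥ z) := by
  rw [mulVec_dotProduct_mulVec, Q_eq_diagonal, ← Hmat_mul_diagonal_weight, Hmat_eq_diagonal,
    diagonal_transpose]

lemma weight_le_lamBar {ξ : ℝ} (hξ : ξ ∈ Icc (0 : ℝ) 1) (i : Fin 2) : P.weight ξ i ≤ P.lamBar := by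
  have hspec (x : ℝ) : spectrum ℝ (P.Q x) = range (P.weight x) := by
    rw [Q_eq_diagonal, spectrum_diagonal]
  obtain ⟨C, hC⟩ := isCompact_Icc.exists_bound_of_continuousOn
    (P.continuous_weight.continuousOn (s := Icc (0 : ℝ) 1))
  have hbdd : BddAbove ((fun x ↦ sSup (spectrum ℝ (P.Q x))) '' Icc (0 : ℝ) 1) := by
    refine ⟨C, ?_⟩
    rintro _ ⟨x, hx, rfl⟩
    simp only [hspec]
    refine csSup_le (range_nonempty _) ?_
    rintro _ ⟨j, rfl⟩
    exact (le_abs_self _).trans ((norm_le_pi_norm _ j).trans (hC x hx))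
  refine le_trans ?_ (le_csSup hbdd (mem_image_of_mem _ hξ))
  simp only [hspec]
  exact le_csSup (finite_range _).bddAbove (mem_range_self i)

lemma lamBar_pos : 0 < P.lamBar :=
  (P.weight_pos 0 0).trans_le (P.weight_le_lamBar (by simp) 0)

variable {M : ℝ → Mat2}

lemma opNorm2_transpose_mul_Q_le (hM : ContinuousOn M (Icc (0 : ℝ) 1)) {ξ : ℝ}
    (hξ : ξ ∈ Icc (0 : ℝ) 1) : opNorm2 ((M ξ)ᵀ * P.Q ξ) ≤ P.supNormMQ M :=
  le_csSup (isCompact_Icc.bddAbove_image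
    (continuous_opNorm2.comp_continuousOn (by fun_prop)))
    (mem_image_of_mem _ hξ)

lemma supNormMQ_pos (hM : ContinuousOn M (Icc (0 : ℝ) 1)) {ξ : ℝ} (hξ : ξ ∈ Icc (0 : ℝ) 1)
    (hMξ : M ξ ≠ 0) : 0 < P.supNormMQ M := by
  refine lt_of_lt_of_le (opNorm2_pos fun h ↦ hMξ ?_) (P.opNorm2_transpose_mul_Q_le hM hξ)
  rwa [(P.posDef_Q ξ).isUnit.mul_left_eq_zero, transpose_eq_zero] at h

variable {y z : ℝ → Vec2}

lemma weightedInner_self_nonneg (z : ℝ → Vec2) : 0 ≤ P.weightedInner z z :=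
  intervalIntegral.integral_nonneg zero_le_one fun ξ _ ↦
    (P.posDef_Q ξ).posSemidef.dotProduct_mulVec_nonneg (z ξ)

lemma weightedInner_self_le (hz : ContinuousOn z (Icc (0 : ℝ) 1)) :
    P.weightedInner z z ≤ P.lamBar * ∫ ξ in (0 : ℝ)..1, ∑ i, z ξ i ^ 2 := by
  rw [weightedInner, ← intervalIntegral.integral_const_mul]
  refine intervalIntegral.integral_mono_on zero_le_one
    (ContinuousOn.intervalIntegrable_of_Icc zero_le_one (by fun_prop))
    (ContinuousOn.intervalIntegrable_of_Icc zero_le_one (by fun_prop)) fun ξ hξ ↦ ?_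
  rw [Q_eq_diagonal]
  exact dotProduct_diagonal_mulVec_le (P.weight_le_lamBar hξ) (z ξ)

lemma dotProduct_K1op (hz : ContinuousOn z (Icc (0 : ℝ) 1)) (w : Vec2) :
    w ⬝ᵥ P.K1op z = ∫ ξ in (0 : ℝ)..1, w ⬝ᵥ (P.K1 ξ *ᵥ z ξ) :=
  dotProduct_intervalIntegral
    (ContinuousOn.intervalIntegrable_of_Icc zero_le_one (by fun_prop)) w

lemma dotProduct_KMop (hM : ContinuousOn M (Icc (0 : ℝ) 1))
    (hz : ContinuousOn z (Icc (0 : ℝ) 1)) (u : Vec2) :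
    u ⬝ᵥ KMop P M z = ∫ ξ in (0 : ℝ)..1, u ⬝ᵥ (((M ξ)ᵀ * P.Q ξ) *ᵥ z ξ) :=
  dotProduct_intervalIntegral
    (ContinuousOn.intervalIntegrable_of_Icc zero_le_one (by fun_prop)) u

lemma weightedInner_eq_of_forcing {w u : Vec2} (hM : ContinuousOn M (Icc (0 : ℝ) 1))
    (hy : ContinuousOn y (Icc (0 : ℝ) 1)) (hz : ContinuousOn z (Icc (0 : ℝ) 1))
    {f : ℝ → Vec2} (hf : ∀ ξ ∈ Ioo (0 : ℝ) 1, f ξ = y ξ - P.Hmat *ᵥ w + M ξ *ᵥ u) :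
    P.weightedInner f z = P.weightedInner y z - w ⬝ᵥ P.K1op z + u ⬝ᵥ KMop P M z := by
  rw [dotProduct_K1op P hz, dotProduct_KMop P hM hz, weightedInner, weightedInner,
    ← intervalIntegral.integral_sub, ← intervalIntegral.integral_add]
  · refine intervalIntegral_congr_Ioo zero_le_one fun ξ hξ ↦ ?_
    rw [hf ξ hξ, add_dotProduct, sub_dotProduct, Hmat_mulVec_dotProduct_Q_mulVec,
      mulVec_dotProduct_mulVec]
  all_goals exact ContinuousOn.intervalIntegrable_of_Icc zero_le_one (by fun_prop)

lemma neg_mul_dotProduct_KMop_le {ω : ℝ} (hω : 0 < ω) {q : ℝ} (hq : 0 ≤ q)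
    (hM : ContinuousOn M (Icc (0 : ℝ) 1)) (hz : ContinuousOn z (Icc (0 : ℝ) 1)) (B : Mat2)
    (x : Vec2) :
    -(q * ((B *ᵥ x) ⬝ᵥ KMop P M z)) ≤
      ω / 2 * (∫ ξ in (0 : ℝ)..1, ∑ i, z ξ i ^ 2) +
        (q * opNorm2 B * P.supNormMQ M) ^ 2 / (2 * ω) * ∑ i, x i ^ 2 := by
  have hzz : IntervalIntegrable (fun ξ ↦ ∑ i, z ξ i ^ 2) volume 0 1 :=
    ContinuousOn.intervalIntegrable_of_Icc zero_le_one (by fun_prop)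
  have hint := intervalIntegral.integral_mono_on zero_le_one
    (ContinuousOn.intervalIntegrable_of_Icc zero_le_one (by fun_prop))
    ((hzz.const_mul _).add intervalIntegrable_const) fun ξ hξ ↦
      neg_mul_mulVec_dotProduct_mulVec_le hω hq B (P.opNorm2_transpose_mul_Q_le hM hξ) x (z ξ)
  simp only [intervalIntegral.integral_add (hzz.const_mul _) intervalIntegrable_const,
    intervalIntegral.integral_neg, intervalIntegral.integral_const_mul,
    intervalIntegral.integral_const, sub_zero, one_smul, ← P.dotProduct_KMop hM hz] at hint
  exact hint

end TireParams

/-- The closed-loop system on `[0, T]`: `X` and `ζ` are `C¹`, with `ζξ` and `ζt` the partial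
derivatives of `ζ`, and solve the equations of the paper for a coupling matrix `G` (there `G₁`),
a gain `B` (there `G₁⁻¹A₁*`) and a feedback weight `γ₁`. -/
structure IsClosedLoopSolution (P : TireParams) (G B : Mat2) (M : ℝ → Mat2) (q γ₁ T : ℝ)
    (ζ ζξ ζt : ℝ → ℝ → Vec2) (X : ℝ → Vec2) : Prop where
  hasDerivWithinAt_state : ∀ t ∈ Icc (0 : ℝ) T,
    HasDerivWithinAt X (-q • X t + G *ᵥ P.K1op (ζ · t)) (Icc (0 : ℝ) T) t
  hasDerivWithinAt_space : ∀ t ∈ Icc (0 : ℝ) T, ∀ ξ ∈ Icc (0 : ℝ) 1,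
    HasDerivWithinAt (ζ · t) (ζξ ξ t) (Icc (0 : ℝ) 1) ξ
  hasDerivWithinAt_time : ∀ ξ ∈ Icc (0 : ℝ) 1, ∀ t ∈ Icc (0 : ℝ) T,
    HasDerivWithinAt (ζ ξ) (ζt ξ t) (Icc (0 : ℝ) T) t
  continuousOn : ContinuousOn (fun p : ℝ × ℝ ↦ ζ p.1 p.2) (Icc (0 : ℝ) 1 ×ˢ Icc (0 : ℝ) T)
  continuousOn_space :
    ContinuousOn (fun p : ℝ × ℝ ↦ ζξ p.1 p.2) (Icc (0 : ℝ) 1 ×ˢ Icc (0 : ℝ) T)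
  continuousOn_time :
    ContinuousOn (fun p : ℝ × ℝ ↦ ζt p.1 p.2) (Icc (0 : ℝ) 1 ×ˢ Icc (0 : ℝ) T)
  boundary : ∀ t ∈ Icc (0 : ℝ) T, ζ 0 t = 0
  pde : ∀ ξ ∈ Ioo (0 : ℝ) 1, ∀ t ∈ Ioo (0 : ℝ) T,
    ζt ξ t + P.Λmat *ᵥ ζξ ξ t =
      P.K3op (ζ · t) - P.Hmat *ᵥ ((B * G)ᵀ *ᵥ KMop P M (ζ · t) + γ₁ • Gᵀ *ᵥ X t) +
        M ξ *ᵥ (B *ᵥ (G *ᵥ P.K1op (ζ · t) - q • X t))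

/-- The paper's Lyapunov functional `V(t)`. -/
def lyapunov (P : TireParams) (γ₁ : ℝ) (ζ : ℝ → ℝ → Vec2) (X : ℝ → Vec2) (t : ℝ) : ℝ :=
  (1 / 2) * (∑ i, X t i ^ 2) + 1 / (2 * γ₁) * P.weightedInner (ζ · t) (ζ · t)

namespace IsClosedLoopSolution

variable {P : TireParams} {G B : Mat2} {M : ℝ → Mat2} {q γ₁ T t : ℝ} {ζ ζξ ζt : ℝ → ℝ → Vec2}
  {X : ℝ → Vec2}

lemma continuousOn_slice {f : ℝ → ℝ → Vec2}
    (hf : ContinuousOn (fun p : ℝ × ℝ ↦ f p.1 p.2) (Icc (0 : ℝ) 1 ×ˢ Icc (0 : ℝ) T))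
    (ht : t ∈ Icc (0 : ℝ) T) : ContinuousOn (f · t) (Icc (0 : ℝ) 1) :=
  hf.comp (f := fun ξ : ℝ ↦ (ξ, t)) (by fun_prop) fun _ hξ ↦ ⟨hξ, ht⟩

variable (h : IsClosedLoopSolution P G B M q γ₁ T ζ ζξ ζt X)

include h

lemma isC1On01 (ht : t ∈ Icc (0 : ℝ) T) : IsC1On01 (ζ · t) (ζξ · t) :=
  ⟨h.hasDerivWithinAt_space t ht, continuousOn_slice h.continuousOn_space ht⟩

lemma weightedInner_time_eq (hM : ContinuousOn M (Icc (0 : ℝ) 1)) (ht : t ∈ Ioo (0 : ℝ) T) :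
    P.weightedInner (ζt · t) (ζ · t) =
      P.weightedInner (P.Aop (ζ · t) (ζξ · t)) (ζ · t) - γ₁ * (X t ⬝ᵥ (G *ᵥ P.K1op (ζ · t))) -
        q * ((B *ᵥ X t) ⬝ᵥ KMop P M (ζ · t)) := by
  have htT := Ioo_subset_Icc_self ht
  have hζξ := continuousOn_slice h.continuousOn_space htT
  have hpde : ∀ ξ ∈ Ioo (0 : ℝ) 1, ζt ξ t = P.Aop (ζ · t) (ζξ · t) ξ -
      P.Hmat *ᵥ ((B * G)ᵀ *ᵥ KMop P M (ζ · t) + γ₁ • Gᵀ *ᵥ X t) +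
        M ξ *ᵥ (B *ᵥ (G *ᵥ P.K1op (ζ · t) - q • X t)) := fun ξ hξ ↦ by
    rw [eq_sub_of_add_eq (h.pde ξ hξ t ht), TireParams.Aop]
    abel
  have hA : ContinuousOn (P.Aop (ζ · t) (ζξ · t)) (Icc (0 : ℝ) 1) := by
    unfold TireParams.Aop
    fun_prop
  rw [P.weightedInner_eq_of_forcing hM hA (continuousOn_slice h.continuousOn htT) hpde]
  set Y := P.K1op (ζ · t)
  set κ := KMop P M (ζ · t)
  have hfeedback : ((B * G)ᵀ *ᵥ κ + γ₁ • Gᵀ *ᵥ X t) ⬝ᵥ Y =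
      (B *ᵥ (G *ᵥ Y)) ⬝ᵥ κ + γ₁ * (X t ⬝ᵥ (G *ᵥ Y)) := by
    rw [add_dotProduct, smul_dotProduct, smul_eq_mul, dotProduct_comm _ Y, dotProduct_comm _ Y,
      dotProduct_transpose_mulVec, dotProduct_transpose_mulVec, mulVec_mulVec, dotProduct_comm κ]
  rw [hfeedback, mulVec_sub, mulVec_smul, sub_dotProduct, smul_dotProduct, smul_eq_mul]
  ring

lemma weightedInner_time_le {ω : ℝ} (hω : 0 < ω) (h1 : Assumption1 P ω)
    (hM : ContinuousOn M (Icc (0 : ℝ) 1)) (hq : 0 ≤ q)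
    (hgain : q / ω * opNorm2 B ^ 2 * P.supNormMQ M ^ 2 ≤ γ₁) (ht : t ∈ Ioo (0 : ℝ) T) :
    P.weightedInner (ζt · t) (ζ · t) ≤
      -(ω / 2) * (∫ ξ in (0 : ℝ)..1, ∑ i, ζ ξ t i ^ 2) + q / 2 * γ₁ * (∑ i, X t i ^ 2) -
        γ₁ * (X t ⬝ᵥ (G *ᵥ P.K1op (ζ · t))) := by
  have htT := Ioo_subset_Icc_self ht
  have hdiss : P.weightedInner (P.Aop (ζ · t) (ζξ · t)) (ζ · t) ≤
      -ω * ∫ ξ in (0 : ℝ)..1, ∑ i, ζ ξ t i ^ 2 :=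
    h1 _ _ (h.isC1On01 htT) (h.boundary t htT)
  have hcross := P.neg_mul_dotProduct_KMop_le hω hq hM
    (continuousOn_slice h.continuousOn htT) B (X t)
  have hcoeff : (q * opNorm2 B * P.supNormMQ M) ^ 2 / (2 * ω) ≤ q / 2 * γ₁ :=
    calc (q * opNorm2 B * P.supNormMQ M) ^ 2 / (2 * ω)
        = q / 2 * (q / ω * opNorm2 B ^ 2 * P.supNormMQ M ^ 2) := by field_simp
      _ ≤ q / 2 * γ₁ := by gcongr
  have hcoeffX := mul_le_mul_of_nonneg_right hcoeff (by positivity : 0 ≤ ∑ i, X t i ^ 2)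
  rw [h.weightedInner_time_eq hM ht]
  linarith

lemma dissipation {ω : ℝ} (hω : 0 < ω) (h1 : Assumption1 P ω)
    (hM : ContinuousOn M (Icc (0 : ℝ) 1)) (hq : 0 < q) (hγ₁ : 0 < γ₁)
    (hgain : q / ω * opNorm2 B ^ 2 * P.supNormMQ M ^ 2 ≤ γ₁) (ht : t ∈ Ioo (0 : ℝ) T) :
    X t ⬝ᵥ (-q • X t + G *ᵥ P.K1op (ζ · t)) + 1 / γ₁ * P.weightedInner (ζt · t) (ζ · t) ≤
      -min q (ω / P.lamBar) * lyapunov P γ₁ ζ X t := by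
  have henergy := h.weightedInner_time_le hω h1 hM hq.le hgain ht
  have hW := P.weightedInner_self_le (continuousOn_slice h.continuousOn (Ioo_subset_Icc_self ht))
  have hW0 := P.weightedInner_self_nonneg (ζ · t)
  have hXX : X t ⬝ᵥ X t = ∑ i, X t i ^ 2 := by simp only [dotProduct, sq]
  rw [dotProduct_add, dotProduct_smul, smul_eq_mul, hXX, lyapunov]
  set W := P.weightedInner (ζ · t) (ζ · t)
  set E := P.weightedInner (ζt · t) (ζ · t)
  set J := ∫ ξ in (0 : ℝ)..1, ∑ i, ζ ξ t i ^ 2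
  set x := ∑ i, X t i ^ 2
  set c := X t ⬝ᵥ (G *ᵥ P.K1op (ζ · t))
  set γ := min q (ω / P.lamBar)
  have hrateX : γ * x ≤ q * x := by
    gcongr
    exact min_le_left _ _
  have hrateζ : γ * W ≤ ω * J :=
    calc γ * W ≤ ω / P.lamBar * W := by gcongr; exact min_le_right _ _
      _ ≤ ω / P.lamBar * (P.lamBar * J) := by have := P.lamBar_pos; gcongr
      _ = ω * J := by field_simp [P.lamBar_pos.ne']
  calc -q * x + c + 1 / γ₁ * E
      ≤ -q * x + c + 1 / γ₁ * (-(ω / 2) * J + q / 2 * γ₁ * x - γ₁ * c) := by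
        gcongr
    _ = -(1 / 2) * (q * x) - 1 / (2 * γ₁) * (ω * J) := by field_simp; ring
    _ ≤ -(1 / 2) * (γ * x) - 1 / (2 * γ₁) * (γ * W) := by
        have := mul_le_mul_of_nonneg_left hrateζ (by positivity : 0 ≤ 1 / (2 * γ₁))
        linarith
    _ = -γ * (1 / 2 * x + 1 / (2 * γ₁) * W) := by ring

lemma continuousOn_lyapunov : ContinuousOn (lyapunov P γ₁ ζ X) (Icc (0 : ℝ) T) := by
  have hX : ContinuousOn X (Icc (0 : ℝ) T) := fun t ht ↦
    (h.hasDerivWithinAt_state t ht).continuousWithinAt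
  have hζ := h.continuousOn
  have hint : ContinuousOn (fun t ↦ P.weightedInner (ζ · t) (ζ · t)) (Icc (0 : ℝ) T) :=
    continuousOn_parametric_intervalIntegral zero_le_one
      (f := fun ξ t ↦ ζ ξ t ⬝ᵥ (P.Q ξ *ᵥ ζ ξ t)) (by fun_prop)
  unfold lyapunov
  fun_prop

lemma hasDerivAt_weightedInner (ht : t ∈ Ioo (0 : ℝ) T) :
    HasDerivAt (fun t ↦ P.weightedInner (ζ · t) (ζ · t))
      (2 * P.weightedInner (ζt · t) (ζ · t)) t := by
  have hζ := h.continuousOn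
  have hζt := h.continuousOn_time
  rw [TireParams.weightedInner, ← intervalIntegral.integral_const_mul]
  refine hasDerivAt_intervalIntegral_of_continuousOn (c := 0) (d := T)
    (f := fun ξ t ↦ ζ ξ t ⬝ᵥ (P.Q ξ *ᵥ ζ ξ t))
    (f' := fun ξ t ↦ 2 * (ζt ξ t ⬝ᵥ (P.Q ξ *ᵥ ζ ξ t))) zero_le_one
    (fun t ht ↦ ?_) (by fun_prop) (fun ξ hξ t ht ↦ ?_) ht
  · have := continuousOn_slice hζ (Ioo_subset_Icc_self ht)
    fun_prop
  · exact hasDerivAt_dotProduct_mulVec_self (P.isSymm_Q ξ)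
      ((h.hasDerivWithinAt_time ξ hξ t (Ioo_subset_Icc_self ht)).hasDerivAt
        (Icc_mem_nhds ht.1 ht.2))

lemma hasDerivAt_lyapunov (ht : t ∈ Ioo (0 : ℝ) T) :
    HasDerivAt (lyapunov P γ₁ ζ X)
      (X t ⬝ᵥ (-q • X t + G *ᵥ P.K1op (ζ · t)) + 1 / γ₁ * P.weightedInner (ζt · t) (ζ · t)) t := by
  have hX := (h.hasDerivWithinAt_state t (Ioo_subset_Icc_self ht)).hasDerivAt
    (Icc_mem_nhds ht.1 ht.2)
  exact (((hasDerivAt_sum_sq hX).const_mul (1 / 2)).fun_add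
    ((h.hasDerivAt_weightedInner ht).const_mul (1 / (2 * γ₁)))).congr_deriv (by ring)

end IsClosedLoopSolution

lemma gain_pos (P : TireParams) {ω q : ℝ} (hω : 0 < ω) (hq : 0 < q) {B : Mat2} (hB : B ≠ 0)
    {M : ℝ → Mat2} (hM : ContinuousOn M (Icc (0 : ℝ) 1))
    (hKM : ∫ ξ in (0 : ℝ)..1, P.K1 ξ * M ξ ≠ 0) :
    0 < q / ω * opNorm2 B ^ 2 * P.supNormMQ M ^ 2 := by
  obtain ⟨ξ, hξ, hξM⟩ := exists_ne_zero_of_intervalIntegral_ne_zero hKM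
  rw [uIcc_of_le zero_le_one] at hξ
  have hsup := P.supNormMQ_pos hM hξ (right_ne_zero_of_mul hξM)
  have hnorm := opNorm2_pos hB
  positivity

theorem statement14_general {P : TireParams} {G B : Mat2} {M : ℝ → Mat2} {ω q γ₁ T : ℝ}
    {ζ ζξ ζt : ℝ → ℝ → Vec2} {X : ℝ → Vec2} (hω : 0 < ω) (h1 : Assumption1 P ω) (hq : 0 < q)
    (hM : ContinuousOn M (Icc (0 : ℝ) 1)) (hγ₁ : 0 < γ₁)
    (hgain : q / ω * opNorm2 B ^ 2 * P.supNormMQ M ^ 2 ≤ γ₁)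
    (h : IsClosedLoopSolution P G B M q γ₁ T ζ ζξ ζt X) :
    ∀ t ∈ Icc (0 : ℝ) T, lyapunov P γ₁ ζ X t ≤
      lyapunov P γ₁ ζ X 0 * Real.exp (-min q (ω / P.lamBar) * t) := by
  simpa only [sub_zero] using le_mul_exp_of_hasDerivAt_le h.continuousOn_lyapunov
    (fun _ ↦ h.hasDerivAt_lyapunov) (fun _ ↦ h.dissipation hω h1 hM hq hγ₁ hgain)

/-- closed-loop exponential decay in the linear case `θ = 0`: along the
closed-loop backstepping target system, the Lyapunov functional
`V(t) = ½‖X_δ(t)‖² + (1/2γ₁)∫₀¹ ζᵀQζ dξ` satisfies `V(t) ≤ V(0)e^{−γt}`. -/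
theorem statement14 (P : TireParams) (m Iz l1 l2 : ℝ)
    (hm : 0 < m) (hIz : 0 < Iz) (hl1 : 0 < l1) (hl2 : 0 < l2)
    (ω : ℝ) (hω : 0 < ω) (h1 : Assumption1 P ω)
    (q : ℝ) (hq : 0 < q)
    (M M' : ℝ → Mat2) (N : Mat2) (hM : IsC1MatOn01 M M') (hM0 : M 0 = 0)
    (hMnorm : (∫ ξ in (0:ℝ)..1, P.K1 ξ * M ξ) = (1 : Mat2))
    (hMode : ∀ ξ ∈ Ioo (0:ℝ) 1,
      P.Λmat * M' ξ = (KopM P.K3 M + P.K4 * M 1) + P.Hmat * N)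
    (γ₁ lamBar γ : ℝ)
    (hγ₁ : γ₁ = q / ω *
      opNorm2 ((G1mat m Iz l1 l2)⁻¹ * (A1mat P.vx + q • (1 : Mat2))) ^ 2 *
        sSup ((fun ξ => opNorm2 ((M ξ)ᵀ * P.Q ξ)) '' Icc (0:ℝ) 1) ^ 2)
    (hlamBar : lamBar = sSup ((fun ξ => sSup (spectrum ℝ (P.Q ξ))) '' Icc (0:ℝ) 1))
    (hγ : γ = min q (ω / lamBar))
    (T : ℝ) (hT : 0 < T)
    (ζ ζξ ζt : ℝ → ℝ → Vec2) (Xδ : ℝ → Vec2)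
    (hX : ∀ t ∈ Icc (0:ℝ) T,
      HasDerivWithinAt Xδ
        (-q • Xδ t + (G1mat m Iz l1 l2).mulVec (P.K1op (fun ξ => ζ ξ t)))
        (Icc (0:ℝ) T) t)
    (hζξ : ∀ t ∈ Icc (0:ℝ) T, ∀ ξ ∈ Icc (0:ℝ) 1,
      HasDerivWithinAt (fun s => ζ s t) (ζξ ξ t) (Icc (0:ℝ) 1) ξ)
    (hζt : ∀ ξ ∈ Icc (0:ℝ) 1, ∀ t ∈ Icc (0:ℝ) T,
      HasDerivWithinAt (fun s => ζ ξ s) (ζt ξ t) (Icc (0:ℝ) T) t)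
    (hζc : ContinuousOn (fun p : ℝ × ℝ => ζ p.1 p.2) (Icc (0:ℝ) 1 ×ˢ Icc (0:ℝ) T))
    (hζξc : ContinuousOn (fun p : ℝ × ℝ => ζξ p.1 p.2) (Icc (0:ℝ) 1 ×ˢ Icc (0:ℝ) T))
    (hζtc : ContinuousOn (fun p : ℝ × ℝ => ζt p.1 p.2) (Icc (0:ℝ) 1 ×ˢ Icc (0:ℝ) T))
    (hbc : ∀ t ∈ Icc (0:ℝ) T, ζ 0 t = 0)
    (hpde : ∀ ξ ∈ Ioo (0:ℝ) 1, ∀ t ∈ Ioo (0:ℝ) T,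
      ζt ξ t + (P.Λmat).mulVec (ζξ ξ t) =
        P.K3op (fun s => ζ s t) -
          (P.Hmat).mulVec
            (((G1mat m Iz l1 l2)⁻¹ * (A1mat P.vx + q • (1 : Mat2)) *
                G1mat m Iz l1 l2)ᵀ.mulVec (KMop P M (fun s => ζ s t)) +
              γ₁ • (G1mat m Iz l1 l2)ᵀ.mulVec (Xδ t)) +
          (M ξ).mulVec
            (((G1mat m Iz l1 l2)⁻¹ * (A1mat P.vx + q • (1 : Mat2))).mulVec
              ((G1mat m Iz l1 l2).mulVec (P.K1op (fun s => ζ s t)) - q • Xδ t))) :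
    ∀ t ∈ Icc (0:ℝ) T,
      (1/2) * (∑ i, (Xδ t i) ^ 2) +
          1 / (2 * γ₁) * ∫ ξ in (0:ℝ)..1, ζ ξ t ⬝ᵥ (P.Q ξ).mulVec (ζ ξ t) ≤
        ((1/2) * (∑ i, (Xδ 0 i) ^ 2) +
            1 / (2 * γ₁) * ∫ ξ in (0:ℝ)..1, ζ ξ 0 ⬝ᵥ (P.Q ξ).mulVec (ζ ξ 0)) *
          Real.exp (-γ * t) := by
  subst hγ₁ hlamBar hγ
  have hB : (G1mat m Iz l1 l2)⁻¹ * (A1mat P.vx + q • (1 : Mat2)) ≠ 0 :=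
    nonsing_inv_mul_ne_zero
      (isUnit_iff_ne_zero.2 (by rw [det_G1mat]; exact neg_ne_zero.2 (by positivity)))
      (A1mat_add_smul_one_ne_zero P.vx hq.ne')
  have hMc : ContinuousOn M (Icc (0 : ℝ) 1) := fun ξ hξ ↦ (hM.1 ξ hξ).continuousWithinAt
  exact statement14_general hω h1 hq hMc
    (gain_pos P hω hq hB hMc (by rw [hMnorm]; exact one_ne_zero)) le_rfl
    ⟨hX, hζξ, hζt, hζc, hζξc, hζtc, hbc, hpde⟩
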